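/- Assume f satisfies (A1)–(A3) and fix χ > 0. There is ε₀ > 0 such that for all 0 < ε < ε₀: if x̂, ŷ ∈ NUE_χ and the ε-charts Ψ_{f̂^{−1}(x̂)}^p and Ψ_{ŷ}^q ε-overlap, then G_{x̂,ŷ} := Ψ_{ŷ}^{−1} ∘ g_{x̂} ∘ Ψ_{x̂} is well-defined on [−10Q_ε(x̂), 10Q_ε(x̂)] and can be written as G_{x̂,ŷ}(t) = A t + h(t) where: (1) |A| < e^{−χ}; (2) |h(0)| < ε(pq)³, |(dh)_0| < ε(pq)³, and Hol_{β/3}(dh) < ε on [−10Q_ε(x̂), 10Q_ε(x̂)]. In particular, G_{x̂,ŷ} is Lipschitz on [−10Q_ε(x̂), 10Q_ε(x̂)] with constant at most e^{−χ/2}. -/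

import Mathlib

open Real MeasureTheory Filter Topology Metric Set

noncomputable section

namespace OneDim

/-- The interval `M = [0, 1/2]`. -/
def Mset : Set ℝ := Set.Icc 0 (1/2)

/-- Data of a piecewise `C^{1+β}` interval map `f : M → M` with discontinuity set `D`,
constants `β ∈ (0,1)`, `a, K > 1`, radius function `r` and inverse branches `g`. -/
structure GoodMap where
  f : ℝ → ℝ
  D : Set ℝ
  β : ℝ
  a : ℝ
  K : ℝ
  r : ℝ → ℝ
  g : ℝ → ℝ → ℝ
  hβ0 : 0 < β
  hβ1 : β < 1
  ha : 1 < a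
  hK : 1 < K
  hmaps : ∀ x ∈ Mset, f x ∈ Mset
  hD : D ⊆ Mset
  hdiff : DifferentiableOn ℝ f (Mset \ D)

namespace GoodMap

/-- The critical set `C = {x ∈ M \ D : df_x = 0}`. -/
def crit (F : GoodMap) : Set ℝ := {x | x ∈ Mset \ F.D ∧ deriv F.f x = 0}

/-- The singular set `S = C ∪ D`. -/
def S (F : GoodMap) : Set ℝ := F.crit ∪ F.D

/-- Distance to the singular set. -/
def dS (F : GoodMap) (x : ℝ) : ℝ := Metric.infDist x F.S

/-- Conditions (A1)–(A3). -/
def SatA (F : GoodMap) : Prop :=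
  ∀ x ∈ Mset, x ∉ F.S → F.f x ∉ F.S →
    (min (F.dS x ^ F.a) (F.dS (F.f x) ^ F.a) < F.r x ∧ F.r x < 1) ∧
    -- (A1)
    (Set.InjOn F.f (Metric.ball x (2 * F.r x)) ∧
      (∀ y ∈ Metric.ball x (2 * F.r x), DifferentiableAt ℝ F.f y) ∧
      F.g x (F.f x) = x ∧
      (∀ z ∈ Metric.ball (F.f x) (2 * F.r x), F.f (F.g x z) = z) ∧
      Set.InjOn (F.g x) (Metric.ball (F.f x) (2 * F.r x)) ∧
      (∀ z ∈ Metric.ball (F.f x) (2 * F.r x), DifferentiableAt ℝ (F.g x) z)) ∧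
    -- (A2)
    ((∀ y ∈ Metric.ball x (2 * F.r x),
        F.dS x ^ F.a ≤ |deriv F.f y| ∧ |deriv F.f y| ≤ F.dS x ^ (-F.a)) ∧
      (∀ z ∈ Metric.ball (F.f x) (2 * F.r x),
        F.dS x ^ F.a ≤ |deriv (F.g x) z| ∧ |deriv (F.g x) z| ≤ F.dS x ^ (-F.a))) ∧
    -- (A3)
    ((∀ y ∈ Metric.ball x (2 * F.r x), ∀ z ∈ Metric.ball x (2 * F.r x),
        |deriv F.f y - deriv F.f z| ≤ F.K * |y - z| ^ F.β) ∧
      (∀ y ∈ Metric.ball (F.f x) (2 * F.r x), ∀ z ∈ Metric.ball (F.f x) (2 * F.r x),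
        |deriv (F.g x) y - deriv (F.g x) z| ≤ F.K * |y - z| ^ F.β))

end GoodMap

/-- Membership in the natural extension space `M̂`. -/
def inMhat (f : ℝ → ℝ) (x : ℤ → ℝ) : Prop :=
  (∀ n, x n ∈ Mset) ∧ ∀ n : ℤ, f (x (n - 1)) = x n

/-- The natural extension map `f̂` (left shift). -/
def fhat (x : ℤ → ℝ) : ℤ → ℝ := fun n => x (n + 1)

/-- Iterate `f̂^k` of the natural extension map, `k ∈ ℤ`. -/
def fhatI (k : ℤ) (x : ℤ → ℝ) : ℤ → ℝ := fun n => x (n + k)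

/-- The metric `d̂(x̂,ŷ) = sup{2^n d(x_n,y_n) : n ≤ 0}` on `M̂`. -/
def dhat (x y : ℤ → ℝ) : ℝ :=
  sSup {t : ℝ | ∃ n : ℤ, n ≤ 0 ∧ t = (2:ℝ) ^ n * |x n - y n|}

/-- The invertible derivative cocycle `d̂f^{(n)}` over `f̂`. -/
def dfhat (f : ℝ → ℝ) (x : ℤ → ℝ) (n : ℤ) : ℝ :=
  if 0 ≤ n then ∏ j ∈ Finset.range n.toNat, deriv f (x (j : ℤ))
  else (∏ j ∈ Finset.range (-n).toNat, deriv f (x (-(j : ℤ) - 1)))⁻¹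

/-- The Pesin parameter `u(x̂)`. -/
def uPes (f : ℝ → ℝ) (χ : ℝ) (x : ℤ → ℝ) : ℝ :=
  Real.sqrt (∑' n : ℕ, Real.exp (2 * (n:ℝ) * χ) * (dfhat f x (-(n:ℤ))) ^ 2)

/-- The Pesin chart `Ψ_{x̂}(t) = t/u(x̂) + x₀`. -/
def Psi (f : ℝ → ℝ) (χ : ℝ) (x : ℤ → ℝ) (t : ℝ) : ℝ := t / uPes f χ x + x 0

/-- The set `NUE_χ`. -/
def NUE (F : GoodMap) (χ : ℝ) : Set (ℤ → ℝ) :=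
  {x | inMhat F.f x ∧ (∀ n, x n ∉ F.S) ∧
    (∃ l > χ, Tendsto (fun n : ℕ => Real.log |dfhat F.f x (n:ℤ)| / (n:ℝ)) atTop (𝓝 l)) ∧
    (∃ l > χ, Tendsto (fun n : ℕ => Real.log |dfhat F.f x (-(n:ℤ))| / (-(n:ℝ))) atTop (𝓝 l))}

/-- `ρ(x̂) = d({x₋₁,x₀,x₁}, S)`. -/
def rho (F : GoodMap) (x : ℤ → ℝ) : ℝ :=
  min (F.dS (x (-1))) (min (F.dS (x 0)) (F.dS (x 1)))

/-- `I_ε = {e^{-εn/3} : n ≥ 0}`. -/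
def Ieps (ε : ℝ) : Set ℝ := {q | ∃ n : ℕ, q = Real.exp (-(ε * n) / 3)}

/-- `Q̃_ε(x̂)`. -/
def Qtilde (F : GoodMap) (χ ε : ℝ) (x : ℤ → ℝ) : ℝ :=
  ε ^ (3 / F.β) *
    min (uPes F.f χ x ^ (-(24 / F.β)))
      (uPes F.f χ (fhatI (-1) x) ^ (-(12 / F.β)) * rho F x ^ (72 * F.a / F.β))

/-- `Q_ε(x̂) = max{q ∈ I_ε : q ≤ Q̃_ε(x̂)}`. -/
def Qeps (F : GoodMap) (χ ε : ℝ) (x : ℤ → ℝ) : ℝ :=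
  sSup {q | q ∈ Ieps ε ∧ q ≤ Qtilde F χ ε x}

/-- The regular set. -/
def Reg (F : GoodMap) : Set (ℤ → ℝ) :=
  {x | inMhat F.f x ∧ (∀ n, x n ∉ F.S) ∧
    Tendsto (fun n : ℕ => Real.log (F.dS (x (n:ℤ))) / (n:ℝ)) atTop (𝓝 0) ∧
    Tendsto (fun n : ℕ => Real.log (F.dS (x (-(n:ℤ)))) / (n:ℝ)) atTop (𝓝 0)}

/-- The set `NUE*_χ`. -/
def NUEstar (F : GoodMap) (χ : ℝ) : Set (ℤ → ℝ) :=
  {x | x ∈ NUE F χ ∧ x ∈ Reg F ∧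
    (∃ nk : ℕ → ℤ, Tendsto nk atTop atBot ∧
      Tendsto (fun k => uPes F.f χ (fhatI (nk k) x)) atTop (𝓝 (uPes F.f χ x))) ∧
    Tendsto (fun n : ℕ => Real.log (uPes F.f χ (fhatI (-(n:ℤ)) x)) / (-(n:ℝ))) atTop (𝓝 0)}

/-- An ε-chart is a pair `(x̂, p)`, representing `Ψ_{x̂}` restricted to `[-p,p]`. -/
structure Chart where
  x : ℤ → ℝ
  p : ℝ

/-- `(x̂, p)` is a genuine ε-chart. -/
def IsChart (F : GoodMap) (χ ε : ℝ) (c : Chart) : Prop :=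
  c.x ∈ NUE F χ ∧ 0 < c.p ∧ c.p ≤ Qeps F χ ε c.x

/-- ε-overlap of two ε-charts. -/
def Overlap (F : GoodMap) (χ ε : ℝ) (c₁ c₂ : Chart) : Prop :=
  Real.exp (-ε) ≤ c₁.p / c₂.p ∧ c₁.p / c₂.p ≤ Real.exp ε ∧
  |c₁.x 0 - c₂.x 0| + |(uPes F.f χ c₁.x)⁻¹ - (uPes F.f χ c₂.x)⁻¹| < (c₁.p * c₂.p) ^ 4

/-- `g_{x̂} = g_{x₋₁}`, the inverse branch of `f` taking `x₀` to `x₋₁`. -/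
def ghat (F : GoodMap) (x : ℤ → ℝ) : ℝ → ℝ := F.g (x (-1))

/-- `G_{x̂} = Ψ_{f̂⁻¹x̂}⁻¹ ∘ g_{x̂} ∘ Ψ_{x̂}`. -/
def Gmap (F : GoodMap) (χ : ℝ) (x : ℤ → ℝ) (t : ℝ) : ℝ :=
  uPes F.f χ (fhatI (-1) x) * (ghat F x (Psi F.f χ x t) - x (-1))

/-- `G_{x̂,ŷ} = Ψ_{ŷ}⁻¹ ∘ g_{x̂} ∘ Ψ_{x̂}`. -/
def Gmap2 (F : GoodMap) (χ : ℝ) (x y : ℤ → ℝ) (t : ℝ) : ℝ :=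
  uPes F.f χ y * (ghat F x (Psi F.f χ x t) - y 0)

/-- `F_{x̂} = Ψ_{f̂x̂}⁻¹ ∘ f ∘ Ψ_{x̂}`. -/
def Fmap (F : GoodMap) (χ : ℝ) (x : ℤ → ℝ) (t : ℝ) : ℝ :=
  uPes F.f χ (fhat x) * (F.f (Psi F.f χ x t) - x 1)

/-- `δ_ε = e^{-εn}` where `n` is the unique positive integer with `e^{-εn} < ε ≤ e^{-ε(n-1)}`. -/
def deltaEps (ε : ℝ) : ℝ :=
  Real.exp (-(ε * ((⌊Real.log (1 / ε) / ε⌋ + 1 : ℤ) : ℝ)))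

/-- Weak edge `v ⤎ w` (from `w = Ψ_{x̂}^p` to `v = Ψ_{ŷ}^q`). -/
def WeakEdge (F : GoodMap) (χ ε : ℝ) (v w : Chart) : Prop :=
  IsChart F χ ε v ∧ IsChart F χ ε w ∧
  Overlap F χ ε ⟨fhatI (-1) w.x, v.p⟩ v ∧
  w.p ≤ Real.exp ε * v.p

/-- Edge `v ← w` (from `w = Ψ_{x̂}^p` to `v = Ψ_{ŷ}^q`). -/
def Edge (F : GoodMap) (χ ε : ℝ) (v w : Chart) : Prop :=
  IsChart F χ ε v ∧ IsChart F χ ε w ∧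
  Overlap F χ ε ⟨fhatI (-1) w.x, v.p⟩ v ∧
  |v.x 1 - w.x 0| < v.p ∧
  Real.exp (-v.p) ≤ uPes F.f χ (fhat v.x) / uPes F.f χ w.x ∧
  uPes F.f χ (fhat v.x) / uPes F.f χ w.x ≤ Real.exp v.p ∧
  w.p = min (Real.exp ε * v.p) (deltaEps ε * Qeps F χ ε w.x)

/-- ε-generalized pseudo-orbit. -/
def IsGPO (F : GoodMap) (χ ε : ℝ) (v : ℤ → Chart) : Prop :=
  ∀ n : ℤ, Edge F χ ε (v n) (v (n + 1))

/-- weak ε-generalized pseudo-orbit. -/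
def IsWeakGPO (F : GoodMap) (χ ε : ℝ) (v : ℤ → Chart) : Prop :=
  ∀ n : ℤ, WeakEdge F χ ε (v n) (v (n + 1))

/-- The range `Ψ_{x̂}([-p,p])` of an ε-chart. -/
def chartRange (F : GoodMap) (χ : ℝ) (c : Chart) : Set ℝ :=
  Psi F.f χ c.x '' Set.Icc (-c.p) c.p

/-- A bi-infinite sequence of ε-charts shadows `x̂ ∈ M̂`. -/
def Shadows (F : GoodMap) (χ : ℝ) (v : ℤ → Chart) (x : ℤ → ℝ) : Prop :=
  inMhat F.f x ∧ ∀ n : ℤ, x n ∈ chartRange F χ (v n)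

/-- `q_ε(x̂) = δ_ε inf{e^{ε|m|} Q_ε(f̂^m x̂) : m ≤ 0}`. -/
def qeps (F : GoodMap) (χ ε : ℝ) (x : ℤ → ℝ) : ℝ :=
  deltaEps ε *
    sInf {t : ℝ | ∃ m : ℤ, m ≤ 0 ∧ t = Real.exp (ε * |(m:ℝ)|) * Qeps F χ ε (fhatI m x)}

/-- Recurrence: some symbol repeats infinitely often in the future and some in the past. -/
def Recurrent {V : Type*} (v : ℤ → V) : Prop :=
  (∃ c, {n : ℤ | 0 < n ∧ v n = c}.Infinite) ∧ ∃ c, {n : ℤ | n < 0 ∧ v n = c}.Infinite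

/-- The distance `d(v,w) = exp(-min{|n| : v_n ≠ w_n})` on sequence spaces. -/
def dSigma {V : Type*} (v w : ℤ → V) : ℝ :=
  sSup {t : ℝ | ∃ n : ℤ, v n ≠ w n ∧ t = Real.exp (-|(n:ℝ)|)}

/-- Sup norm over a set. -/
def supNorm (h : ℝ → ℝ) (I : Set ℝ) : ℝ := sSup ((fun t => |h t|) '' I)

/-- Hölder constant over a set. -/
def holConst (γ : ℝ) (h : ℝ → ℝ) (I : Set ℝ) : ℝ :=
  sSup {r : ℝ | ∃ t ∈ I, ∃ s ∈ I, t ≠ s ∧ r = |h t - h s| / |t - s| ^ γ}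

/-!
The derivative of `G_{x̂,ŷ}` at `0` is `u(ŷ) / u(f̂⁻¹x̂)` times the multiplier
`A = u(f̂⁻¹x̂) / (df_{x₋₁} u(x̂))`, and the recursion
`u(x̂)² = 1 + (e^χ u(f̂⁻¹x̂) / df_{x₋₁})²` says exactly that `|A| < e^{-χ}`. The overlap condition
makes `u(ŷ) / u(f̂⁻¹x̂)` close to `1`, up to an error `u(ŷ) (pq)⁴`, one power of `pq` in which
absorbs `u(ŷ)` because `q ≤ Q_ε(ŷ)`. Finally, `dg` is `β`-Hölder; giving up the exponent `2β/3` on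
an interval of length `20 Q_ε(x̂)` gains a factor `ε² / u(f̂⁻¹x̂)`, which beats both the constant
`K` and the factor `u(ŷ)`.
-/

/-! ### The Pesin parameter -/

/-- The `n`-th term `e^{2nχ} |d̂f^{(-n)}_{x̂}|²` of the series defining `u(x̂)²`. -/
def pesinTerm (f : ℝ → ℝ) (χ : ℝ) (x : ℤ → ℝ) (n : ℕ) : ℝ :=
  Real.exp (2 * (n : ℝ) * χ) * (dfhat f x (-(n : ℤ))) ^ 2

/-- The points of `M̂` whose orbit avoids `S` and for which the series defining `u(x̂)` converges.
They include `NUE_χ`, and the chart `Ψ_{x̂}` makes sense for all of them. -/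
structure HasPesinChart (F : GoodMap) (χ : ℝ) (x : ℤ → ℝ) : Prop where
  mem_Mhat : inMhat F.f x
  notMem_S : ∀ n, x n ∉ F.S
  summable : Summable (pesinTerm F.f χ x)

section PesinParameter

variable {f : ℝ → ℝ} {χ : ℝ} {x : ℤ → ℝ}

lemma pesinTerm_nonneg (n : ℕ) : 0 ≤ pesinTerm f χ x n := by
  unfold pesinTerm
  positivity

lemma dfhat_neg_natCast (n : ℕ) :
    dfhat f x (-(n : ℤ)) = (∏ j ∈ Finset.range n, deriv f (x (-(j : ℤ) - 1)))⁻¹ := by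
  rcases n.eq_zero_or_pos with rfl | hn
  · simp [dfhat]
  · rw [dfhat, if_neg (by lia), neg_neg, Int.toNat_natCast]

lemma dfhat_neg_succ (n : ℕ) :
    dfhat f x (-((n + 1 : ℕ) : ℤ)) =
      (deriv f (x (-1)))⁻¹ * dfhat f (fhatI (-1) x) (-(n : ℤ)) := by
  have hshift (j : ℕ) : x (-((j + 1 : ℕ) : ℤ) - 1) = fhatI (-1) x (-(j : ℤ) - 1) := by
    rw [fhatI]
    congr 1
    push_cast
    ring
  simp only [dfhat_neg_natCast, Finset.prod_range_succ', hshift, mul_inv, mul_comm,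
    Nat.cast_zero, neg_zero, zero_sub]

lemma pesinTerm_zero : pesinTerm f χ x 0 = 1 := by
  simp [pesinTerm, dfhat]

lemma pesinTerm_succ (n : ℕ) :
    pesinTerm f χ x (n + 1) =
      (Real.exp χ * (deriv f (x (-1)))⁻¹) ^ 2 * pesinTerm f χ (fhatI (-1) x) n := by
  have hexp : Real.exp (2 * ((n + 1 : ℕ) : ℝ) * χ) =
      Real.exp χ ^ 2 * Real.exp (2 * (n : ℝ) * χ) := by
    rw [← Real.exp_nat_mul, ← Real.exp_add]
    push_cast
    ring_nf
  rw [pesinTerm, pesinTerm, dfhat_neg_succ, hexp]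
  ring

lemma summable_exp_mul_sq_of_tendsto_log {d : ℕ → ℝ} {l : ℝ} (hl : χ < l)
    (hd : Tendsto (fun n : ℕ => Real.log |d n| / (-(n : ℝ))) atTop (𝓝 l)) :
    Summable fun n : ℕ => Real.exp (2 * (n : ℝ) * χ) * d n ^ 2 := by
  have hgeom : Summable fun n : ℕ => Real.exp (χ - l) ^ n :=
    summable_geometric_of_lt_one (Real.exp_pos _).le (Real.exp_lt_one_iff.mpr (by linarith))
  refine .of_norm_bounded_eventually_nat hgeom ?_
  filter_upwards [hd.eventually (lt_mem_nhds (show (χ + l) / 2 < l by linarith)),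
    eventually_gt_atTop 0] with n hlog hn
  rw [div_neg, lt_neg, div_lt_iff₀ (Nat.cast_pos.mpr hn)] at hlog
  have hdn : |d n| ≤ Real.exp (-((χ + l) / 2) * n) :=
    (Real.le_exp_log _).trans (Real.exp_le_exp.mpr hlog.le)
  calc ‖Real.exp (2 * (n : ℝ) * χ) * d n ^ 2‖
      = Real.exp (2 * (n : ℝ) * χ) * |d n| ^ 2 := by
        rw [Real.norm_of_nonneg (by positivity), sq_abs]
    _ ≤ Real.exp (2 * (n : ℝ) * χ) * Real.exp (-((χ + l) / 2) * n) ^ 2 := by gcongr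
    _ = Real.exp (χ - l) ^ n := by
        rw [← Real.exp_nat_mul, ← Real.exp_nat_mul, ← Real.exp_add]
        push_cast
        ring_nf

lemma hasPesinChart_of_mem_NUE {F : GoodMap} (hx : x ∈ NUE F χ) : HasPesinChart F χ x := by
  obtain ⟨hM, hS, -, l, hl, hlog⟩ := hx
  exact ⟨hM, hS, summable_exp_mul_sq_of_tendsto_log hl hlog⟩

lemma uPes_nonneg : 0 ≤ uPes f χ x := Real.sqrt_nonneg _

lemma uPes_sq : uPes f χ x ^ 2 = ∑' n, pesinTerm f χ x n :=
  Real.sq_sqrt (tsum_nonneg pesinTerm_nonneg)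

lemma uPes_sq_eq_one_add (hx : Summable (pesinTerm f χ x)) :
    uPes f χ x ^ 2 =
      1 + (Real.exp χ * (deriv f (x (-1)))⁻¹) ^ 2 * uPes f χ (fhatI (-1) x) ^ 2 := by
  simp only [uPes_sq, hx.tsum_eq_zero_add, pesinTerm_zero, pesinTerm_succ, tsum_mul_left]

lemma one_le_uPes (hx : Summable (pesinTerm f χ x)) : 1 ≤ uPes f χ x := by
  rw [← one_le_sq_iff₀ uPes_nonneg, uPes_sq_eq_one_add hx]
  exact le_add_of_nonneg_right (by positivity)

/-- The linear part `A` of the representation `t ↦ A t + h(t)`. It depends on `x̂` only, being the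
derivative at `0` of `G_{x̂} = Ψ_{f̂⁻¹x̂}⁻¹ ∘ g_{x̂} ∘ Ψ_{x̂}`. -/
def pesinMultiplier (f : ℝ → ℝ) (χ : ℝ) (x : ℤ → ℝ) : ℝ :=
  uPes f χ (fhatI (-1) x) * (deriv f (x (-1)))⁻¹ / uPes f χ x

lemma abs_pesinMultiplier_lt (hx : Summable (pesinTerm f χ x)) :
    |pesinMultiplier f χ x| < Real.exp (-χ) := by
  have hu : 0 < uPes f χ x := one_pos.trans_le (one_le_uPes hx)
  have hlt : |Real.exp χ * (uPes f χ (fhatI (-1) x) * (deriv f (x (-1)))⁻¹)| < uPes f χ x := by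
    refine abs_lt_of_sq_lt_sq ?_ hu.le
    rw [uPes_sq_eq_one_add hx]
    linarith
  rw [pesinMultiplier, abs_div, abs_of_pos hu, div_lt_iff₀ hu, Real.exp_neg,
    lt_inv_mul_iff₀ (Real.exp_pos χ)]
  rwa [abs_mul, Real.abs_exp] at hlt

end PesinParameter

namespace HasPesinChart

variable {F : GoodMap} {χ : ℝ} {x : ℤ → ℝ}

lemma f_apply_neg_one (hx : HasPesinChart F χ x) : F.f (x (-1)) = x 0 := by
  simpa using hx.mem_Mhat.2 0

lemma deriv_ne_zero (hx : HasPesinChart F χ x) (n : ℤ) : deriv F.f (x n) ≠ 0 := fun h =>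
  hx.notMem_S n <| .inl ⟨⟨hx.mem_Mhat.1 n, fun hD => hx.notMem_S n (.inr hD)⟩, h⟩

lemma one_le_uPes (hx : HasPesinChart F χ x) : 1 ≤ uPes F.f χ x :=
  OneDim.one_le_uPes hx.summable

lemma uPes_pos (hx : HasPesinChart F χ x) : 0 < uPes F.f χ x :=
  one_pos.trans_le hx.one_le_uPes

lemma shift (hx : HasPesinChart F χ x) : HasPesinChart F χ (fhatI (-1) x) where
  mem_Mhat := by
    refine ⟨fun n => hx.mem_Mhat.1 _, fun n => ?_⟩
    simpa only [fhatI, sub_add_eq_add_sub] using hx.mem_Mhat.2 (n + -1)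
  notMem_S n := hx.notMem_S _
  summable := by
    have hc : (Real.exp χ * (deriv F.f (x (-1)))⁻¹) ^ 2 ≠ 0 :=
      pow_ne_zero 2 (mul_ne_zero (Real.exp_ne_zero χ) (inv_ne_zero (hx.deriv_ne_zero _)))
    simpa only [pesinTerm_succ, summable_mul_left_iff hc] using
      (summable_nat_add_iff 1).mpr hx.summable

lemma abs_Psi_sub_Psi_le (hx : HasPesinChart F χ x) (t s : ℝ) :
    |Psi F.f χ x t - Psi F.f χ x s| ≤ |t - s| := by
  rw [Psi, Psi, add_sub_add_right_eq_sub, ← sub_div, abs_div, abs_of_pos hx.uPes_pos]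
  exact div_le_self (abs_nonneg _) hx.one_le_uPes

end HasPesinChart

/-! ### The size of `Q_ε` -/

section SizeOfQ

variable {F : GoodMap} {χ ε : ℝ} {x : ℤ → ℝ}

lemma dS_le_one {z : ℝ} (hz : z ∈ Mset) : F.dS z ≤ 1 := by
  rcases F.S.eq_empty_or_nonempty with hS | ⟨s, hs⟩
  · simp [GoodMap.dS, hS]
  · have hsM : s ∈ Mset := hs.elim (fun h => h.1.1) (fun h => F.hD h)
    refine (Metric.infDist_le_dist_of_mem hs).trans ((Real.dist_le_of_mem_Icc hz hsM).trans ?_)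
    norm_num

lemma rho_nonneg : 0 ≤ rho F x :=
  le_min Metric.infDist_nonneg (le_min Metric.infDist_nonneg Metric.infDist_nonneg)

lemma rho_le_one (hx : x (-1) ∈ Mset) : rho F x ≤ 1 :=
  (min_le_left _ _).trans (dS_le_one hx)

lemma Qeps_nonneg : 0 ≤ Qeps F χ ε x := by
  refine Real.sSup_nonneg ?_
  rintro _ ⟨⟨n, rfl⟩, -⟩
  exact (Real.exp_pos _).le

lemma Qeps_le_Qtilde (hε : 0 ≤ ε) : Qeps F χ ε x ≤ Qtilde F χ ε x := by
  have hρ : 0 ≤ rho F x := rho_nonneg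
  refine Real.sSup_le (fun q hq => hq.2) (mul_nonneg (by positivity) (le_min ?_ ?_))
  · exact Real.rpow_nonneg uPes_nonneg _
  · exact mul_nonneg (Real.rpow_nonneg uPes_nonneg _) (by positivity)

lemma eps_rpow_le_pow_three (hε : 0 < ε) (hε1 : ε ≤ 1) : ε ^ (3 / F.β) ≤ ε ^ 3 := by
  rw [← Real.rpow_natCast]
  refine Real.rpow_le_rpow_of_exponent_ge hε hε1 ?_
  rw [le_div_iff₀ F.hβ0]
  push_cast
  linarith [F.hβ1]

lemma Qeps_le_pow_three_div_uPes (hε : 0 < ε) (hε1 : ε ≤ 1) (hx : HasPesinChart F χ x) :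
    Qeps F χ ε x ≤ ε ^ 3 / uPes F.f χ x := by
  have hexponent : -(24 / F.β) ≤ -1 := by
    rw [neg_le_neg_iff, le_div_iff₀ F.hβ0]
    linarith [F.hβ1]
  calc Qeps F χ ε x
      ≤ ε ^ (3 / F.β) * uPes F.f χ x ^ (-(24 / F.β)) :=
        (Qeps_le_Qtilde hε.le).trans (mul_le_mul_of_nonneg_left (min_le_left _ _) (by positivity))
    _ ≤ ε ^ 3 * uPes F.f χ x ^ (-1 : ℝ) :=
        mul_le_mul (eps_rpow_le_pow_three hε hε1)
          (Real.rpow_le_rpow_of_exponent_le hx.one_le_uPes hexponent)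
          (Real.rpow_nonneg uPes_nonneg _) (by positivity)
    _ = ε ^ 3 / uPes F.f χ x := by rw [Real.rpow_neg_one, div_eq_mul_inv]

lemma Qeps_le_eps (hε : 0 < ε) (hε1 : ε ≤ 1) (hx : HasPesinChart F χ x) : Qeps F χ ε x ≤ ε :=
  calc Qeps F χ ε x ≤ ε ^ 3 / uPes F.f χ x := Qeps_le_pow_three_div_uPes hε hε1 hx
    _ ≤ ε ^ 3 := div_le_self (by positivity) hx.one_le_uPes
    _ ≤ ε := pow_le_of_le_one hε.le hε1 (by norm_num)

lemma Qeps_le_mul_shift (hε : 0 ≤ ε) :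
    Qeps F χ ε x ≤ ε ^ (3 / F.β) *
      (uPes F.f χ (fhatI (-1) x) ^ (-(12 / F.β)) * rho F x ^ (72 * F.a / F.β)) :=
  (Qeps_le_Qtilde hε).trans (mul_le_mul_of_nonneg_left (min_le_right _ _) (by positivity))

lemma Qeps_le_eps_mul_rho_rpow (hε : 0 < ε) (hε1 : ε ≤ 1) (hx : HasPesinChart F χ x) :
    Qeps F χ ε x ≤ ε * rho F x ^ F.a := by
  have hβ := F.hβ0
  have hρ : 0 ≤ rho F x := rho_nonneg
  have hv0 : 0 < uPes F.f χ (fhatI (-1) x) := hx.shift.uPes_pos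
  have hε3 : ε ^ (3 / F.β) ≤ ε :=
    (eps_rpow_le_pow_three hε hε1).trans (pow_le_of_le_one hε.le hε1 (by norm_num))
  have hv : uPes F.f χ (fhatI (-1) x) ^ (-(12 / F.β)) ≤ 1 :=
    Real.rpow_le_one_of_one_le_of_nonpos hx.shift.one_le_uPes (neg_nonpos.mpr (by positivity))
  have hρa : rho F x ^ (72 * F.a / F.β) ≤ rho F x ^ F.a := by
    refine Real.rpow_le_rpow_of_exponent_ge' hρ (rho_le_one (hx.mem_Mhat.1 _)) ?_ ?_
    · linarith [F.ha]
    · rw [le_div_iff₀ hβ]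
      nlinarith [F.ha, F.hβ1]
  calc Qeps F χ ε x ≤ _ := Qeps_le_mul_shift hε.le
    _ ≤ ε * (1 * rho F x ^ F.a) := by gcongr
    _ = ε * rho F x ^ F.a := by rw [one_mul]

lemma Qeps_rpow_le (hε : 0 < ε) (hx : HasPesinChart F χ x) :
    Qeps F χ ε x ^ (2 * F.β / 3) ≤ ε ^ 2 / uPes F.f χ (fhatI (-1) x) := by
  have hβ := F.hβ0
  have hρ : 0 ≤ rho F x := rho_nonneg
  have hv := hx.shift.uPes_pos
  set v := uPes F.f χ (fhatI (-1) x)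
  have hQ : Qeps F χ ε x ≤ ε ^ (3 / F.β) * v ^ (-(12 / F.β)) := by
    refine (Qeps_le_mul_shift hε.le).trans ?_
    gcongr
    refine mul_le_of_le_one_right (by positivity) (Real.rpow_le_one hρ ?_ ?_)
    · exact rho_le_one (hx.mem_Mhat.1 _)
    · have := F.ha
      positivity
  calc Qeps F χ ε x ^ (2 * F.β / 3)
      ≤ (ε ^ (3 / F.β) * v ^ (-(12 / F.β))) ^ (2 * F.β / 3) :=
        Real.rpow_le_rpow Qeps_nonneg hQ (by positivity)
    _ = ε ^ (2 : ℝ) * v ^ (-8 : ℝ) := by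
        rw [Real.mul_rpow (by positivity) (by positivity), ← Real.rpow_mul hε.le,
          ← Real.rpow_mul hv.le]
        congr 2 <;> field_simp
        norm_num
    _ ≤ ε ^ (2 : ℝ) * v ^ (-1 : ℝ) := by
        gcongr
        · exact hx.shift.one_le_uPes
        · norm_num
    _ = ε ^ 2 / v := by rw [Real.rpow_two, Real.rpow_neg_one, div_eq_mul_inv]

lemma abs_sub_rpow_le (hε : 0 < ε) (hx : HasPesinChart F χ x) {t s : ℝ}
    (ht : t ∈ Icc (-(10 * Qeps F χ ε x)) (10 * Qeps F χ ε x))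
    (hs : s ∈ Icc (-(10 * Qeps F χ ε x)) (10 * Qeps F χ ε x)) :
    |t - s| ^ F.β ≤ 20 * (ε ^ 2 / uPes F.f χ (fhatI (-1) x)) * |t - s| ^ (F.β / 3) := by
  have hβ := F.hβ0
  have hts : |t - s| ≤ 20 * Qeps F χ ε x :=
    (Real.dist_le_of_mem_Icc ht hs).trans_eq (by ring)
  have h20 : (20 : ℝ) ^ (2 * F.β / 3) ≤ 20 :=
    Real.rpow_le_self_of_one_le (by norm_num) (by linarith [F.hβ1])
  calc |t - s| ^ F.β = |t - s| ^ (2 * F.β / 3) * |t - s| ^ (F.β / 3) := by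
        rw [← Real.rpow_add_of_nonneg (abs_nonneg _) (by positivity) (by positivity)]
        ring_nf
    _ ≤ (20 * Qeps F χ ε x) ^ (2 * F.β / 3) * |t - s| ^ (F.β / 3) := by gcongr
    _ = 20 ^ (2 * F.β / 3) * Qeps F χ ε x ^ (2 * F.β / 3) * |t - s| ^ (F.β / 3) := by
        rw [Real.mul_rpow (by norm_num) Qeps_nonneg]
    _ ≤ 20 * (ε ^ 2 / uPes F.f χ (fhatI (-1) x)) * |t - s| ^ (F.β / 3) := by
        gcongr
        · exact Real.rpow_nonneg Qeps_nonneg _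
        · exact Qeps_rpow_le hε hx

end SizeOfQ

/-! ### Inverse branches -/

/-- The part of (A1) and (A3) concerning the inverse branch `g_z`: its domain is not too small, and
on it `g_z` is a differentiable right inverse of `f` with `β`-Hölder derivative. -/
structure GoodMap.HasHolderInverseBranch (F : GoodMap) (z : ℝ) : Prop where
  min_rpow_lt_r : min (F.dS z ^ F.a) (F.dS (F.f z) ^ F.a) < F.r z
  g_f : F.g z (F.f z) = z
  f_g : ∀ w ∈ Metric.ball (F.f z) (2 * F.r z), F.f (F.g z w) = w
  differentiableAt_g : ∀ w ∈ Metric.ball (F.f z) (2 * F.r z), DifferentiableAt ℝ (F.g z) w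
  abs_deriv_g_sub_le : ∀ v ∈ Metric.ball (F.f z) (2 * F.r z),
    ∀ w ∈ Metric.ball (F.f z) (2 * F.r z),
      |deriv (F.g z) v - deriv (F.g z) w| ≤ F.K * |v - w| ^ F.β

lemma GoodMap.SatA.hasHolderInverseBranch {F : GoodMap} (hA : F.SatA) {z : ℝ} (hz : z ∈ Mset)
    (hzS : z ∉ F.S) (hfS : F.f z ∉ F.S) : F.HasHolderInverseBranch z := by
  obtain ⟨⟨hr, -⟩, ⟨-, -, hgf, hfg, -, hdiff⟩, -, -, hHolder⟩ := hA z hz hzS hfS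
  exact ⟨hr, hgf, hfg, hdiff, hHolder⟩

namespace GoodMap.HasHolderInverseBranch

variable {F : GoodMap} {z : ℝ}

lemma r_pos (hB : F.HasHolderInverseBranch z) : 0 < F.r z :=
  (le_min (Real.rpow_nonneg Metric.infDist_nonneg _)
    (Real.rpow_nonneg Metric.infDist_nonneg _)).trans_lt hB.min_rpow_lt_r

lemma deriv_g (hB : F.HasHolderInverseBranch z) (hz : deriv F.f z ≠ 0) :
    deriv (F.g z) (F.f z) = (deriv F.f z)⁻¹ := by
  have hmem : F.f z ∈ Metric.ball (F.f z) (2 * F.r z) :=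
    Metric.mem_ball_self (by linarith [hB.r_pos])
  refine (HasDerivAt.of_local_left_inverse (hB.differentiableAt_g _ hmem).continuousAt ?_ hz
    (eventually_of_mem (Metric.isOpen_ball.mem_nhds hmem) hB.f_g)).deriv
  rw [hB.g_f]
  exact (differentiableAt_of_deriv_ne_zero hz).hasDerivAt

lemma rho_rpow_lt_r {x : ℤ → ℝ} (hB : F.HasHolderInverseBranch (x (-1)))
    (hf : F.f (x (-1)) = x 0) : rho F x ^ F.a < F.r (x (-1)) := by
  have ha : 0 ≤ F.a := by linarith [F.ha]
  refine (le_min ?_ ?_).trans_lt hB.min_rpow_lt_r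
  · exact Real.rpow_le_rpow rho_nonneg (min_le_left _ _) ha
  · rw [hf]
    exact Real.rpow_le_rpow rho_nonneg ((min_le_right _ _).trans (min_le_left _ _)) ha

end GoodMap.HasHolderInverseBranch

lemma Psi_zero {f : ℝ → ℝ} {χ : ℝ} {x : ℤ → ℝ} : Psi f χ x 0 = x 0 := by
  rw [Psi, zero_div, zero_add]

lemma HasPesinChart.Psi_mem_ball {F : GoodMap} {χ ε t : ℝ} {x : ℤ → ℝ} (hx : HasPesinChart F χ x)
    (hB : F.HasHolderInverseBranch (x (-1))) (hε : 0 < ε) (hε5 : ε ≤ 1 / 5)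
    (ht : t ∈ Icc (-(10 * Qeps F χ ε x)) (10 * Qeps F χ ε x)) :
    Psi F.f χ x t ∈ Metric.ball (x 0) (2 * F.r (x (-1))) := by
  have hρ : 0 ≤ rho F x ^ F.a := Real.rpow_nonneg rho_nonneg _
  rw [Metric.mem_ball, Real.dist_eq]
  calc |Psi F.f χ x t - x 0| ≤ |t| := by
        simpa only [Psi_zero, sub_zero] using hx.abs_Psi_sub_Psi_le t 0
    _ ≤ 10 * Qeps F χ ε x := abs_le.mpr ht
    _ ≤ 10 * (1 / 5 * rho F x ^ F.a) := by
        gcongr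
        exact (Qeps_le_eps_mul_rho_rpow hε (by linarith) hx).trans (by gcongr)
    _ < 2 * F.r (x (-1)) := by linarith [hB.rho_rpow_lt_r hx.f_apply_neg_one]

/-! ### The map `G_{x̂,ŷ}` and its remainder -/

lemma holConst_le {γ C : ℝ} {h : ℝ → ℝ} {I : Set ℝ} (hC : 0 ≤ C)
    (hI : ∀ t ∈ I, ∀ s ∈ I, |h t - h s| ≤ C * |t - s| ^ γ) : holConst γ h I ≤ C := by
  refine Real.sSup_le ?_ hC
  rintro _ ⟨t, ht, s, hs, hts, rfl⟩
  have : 0 < |t - s| := abs_pos.mpr (sub_ne_zero.mpr hts)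
  rw [div_le_iff₀ (by positivity)]
  exact hI t ht s hs

lemma abs_sub_le_of_deriv_holder_at_zero {G : ℝ → ℝ} {R C γ t s : ℝ} (hR : R ≤ 1) (hγ : 0 ≤ γ)
    (hC : 0 ≤ C) (hG : ∀ z ∈ Icc (-R) R, DifferentiableAt ℝ G z)
    (hholder : ∀ z ∈ Icc (-R) R, |deriv G z - deriv G 0| ≤ C * |z| ^ γ)
    (ht : t ∈ Icc (-R) R) (hs : s ∈ Icc (-R) R) :
    |G t - G s| ≤ (|deriv G 0| + C) * |t - s| := by
  refine (convex_Icc (-R) R).norm_image_sub_le_of_norm_deriv_le hG (fun z hz => ?_) hs ht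
  have hpow : |z| ^ γ ≤ 1 := Real.rpow_le_one (abs_nonneg _) ((abs_le.mpr hz).trans hR) hγ
  calc |deriv G z| = |deriv G 0 + (deriv G z - deriv G 0)| := by rw [add_sub_cancel]
    _ ≤ |deriv G 0| + C * |z| ^ γ := (abs_add_le _ _).trans (by gcongr; exact hholder z hz)
    _ ≤ |deriv G 0| + C := by gcongr; exact mul_le_of_le_one_right hC hpow

lemma le_two_mul_of_mul_abs_inv_sub_inv_le_one {v w : ℝ} (hv : 0 < v) (hw : 0 < w)
    (h : w * |v⁻¹ - w⁻¹| ≤ 1) : w ≤ 2 * v := by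
  have hdiv : w / v - 1 ≤ 1 :=
    calc w / v - 1 = w * (v⁻¹ - w⁻¹) := by field_simp
      _ ≤ w * |v⁻¹ - w⁻¹| := by gcongr; exact le_abs_self _
      _ ≤ 1 := h
  rw [← div_le_iff₀ hv]
  linarith

lemma uPes_mul_mul_le {F : GoodMap} {χ ε p q : ℝ} {y : ℤ → ℝ} (hy : HasPesinChart F χ y)
    (hε : 0 < ε) (hε1 : ε ≤ 1) (hp : p ≤ 1) (hq0 : 0 ≤ q) (hq : q ≤ Qeps F χ ε y) :
    uPes F.f χ y * (p * q) ≤ ε := by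
  have hw := hy.uPes_pos
  calc uPes F.f χ y * (p * q) ≤ uPes F.f χ y * (1 * (ε ^ 3 / uPes F.f χ y)) := by
        gcongr
        exact hq.trans (Qeps_le_pow_three_div_uPes hε hε1 hy)
    _ = ε ^ 3 := by field_simp
    _ ≤ ε := pow_le_of_le_one hε.le hε1 (by norm_num)

lemma mul_lt_mul_pow_three {w s ε δ : ℝ} (hw : 0 < w) (hs : 0 ≤ s) (hws : w * s ≤ ε)
    (hδ : δ < s ^ 4) : w * δ < ε * s ^ 3 :=
  calc w * δ < w * s ^ 4 := by gcongr
    _ = w * s * s ^ 3 := by ring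
    _ ≤ ε * s ^ 3 := by gcongr

/-- The nonlinear part `h` of the representation `G_{x̂,ŷ}(t) = A t + h(t)`. -/
def pesinRemainder (F : GoodMap) (χ : ℝ) (x y : ℤ → ℝ) (t : ℝ) : ℝ :=
  Gmap2 F χ x y t - pesinMultiplier F.f χ x * t

section TwoCharts

variable {F : GoodMap} {χ ε t s : ℝ} {x y : ℤ → ℝ}

lemma hasDerivAt_Gmap2 (hg : DifferentiableAt ℝ (ghat F x) (Psi F.f χ x t)) :
    HasDerivAt (Gmap2 F χ x y)
      (uPes F.f χ y * (deriv (ghat F x) (Psi F.f χ x t) / uPes F.f χ x)) t := by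
  have hPsi : HasDerivAt (Psi F.f χ x) (1 / uPes F.f χ x) t :=
    ((hasDerivAt_id t).div_const _).add_const _
  have hG := ((hg.hasDerivAt.comp t hPsi).sub_const (y 0)).const_mul (uPes F.f χ y)
  rwa [mul_one_div] at hG

lemma deriv_pesinRemainder (hG : DifferentiableAt ℝ (Gmap2 F χ x y) t) :
    deriv (pesinRemainder F χ x y) t =
      deriv (Gmap2 F χ x y) t - pesinMultiplier F.f χ x := by
  have h := hG.hasDerivAt.sub ((hasDerivAt_id t).const_mul (pesinMultiplier F.f χ x))
  rw [mul_one] at h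
  exact h.deriv

namespace HasPesinChart

lemma differentiableAt_ghat (hx : HasPesinChart F χ x) (hB : F.HasHolderInverseBranch (x (-1)))
    (hmem : Psi F.f χ x t ∈ Metric.ball (x 0) (2 * F.r (x (-1)))) :
    DifferentiableAt ℝ (ghat F x) (Psi F.f χ x t) :=
  hB.differentiableAt_g _ (by rwa [hx.f_apply_neg_one])

lemma differentiableAt_Gmap2 (hx : HasPesinChart F χ x) (hB : F.HasHolderInverseBranch (x (-1)))
    (hε : 0 < ε) (hε5 : ε ≤ 1 / 5)
    (ht : t ∈ Icc (-(10 * Qeps F χ ε x)) (10 * Qeps F χ ε x)) :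
    DifferentiableAt ℝ (Gmap2 F χ x y) t :=
  (hasDerivAt_Gmap2 (hx.differentiableAt_ghat hB
    (hx.Psi_mem_ball hB hε hε5 ht))).differentiableAt

lemma pesinRemainder_zero (hx : HasPesinChart F χ x)
    (hB : F.HasHolderInverseBranch (x (-1))) :
    pesinRemainder F χ x y 0 = uPes F.f χ y * (x (-1) - y 0) := by
  rw [pesinRemainder, mul_zero, sub_zero, Gmap2, ghat, Psi_zero, ← hx.f_apply_neg_one, hB.g_f]

lemma deriv_pesinRemainder_zero (hx : HasPesinChart F χ x) (hy : HasPesinChart F χ y)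
    (hB : F.HasHolderInverseBranch (x (-1))) :
    deriv (pesinRemainder F χ x y) 0 = pesinMultiplier F.f χ x *
      (uPes F.f χ y * ((uPes F.f χ (fhatI (-1) x))⁻¹ - (uPes F.f χ y)⁻¹)) := by
  have hv := hx.shift.uPes_pos
  have hw := hy.uPes_pos
  have hmem : Psi F.f χ x 0 ∈ Metric.ball (x 0) (2 * F.r (x (-1))) := by
    rw [Psi_zero]
    exact Metric.mem_ball_self (by linarith [hB.r_pos])
  have hG := hasDerivAt_Gmap2 (y := y) (hx.differentiableAt_ghat hB hmem)
  rw [deriv_pesinRemainder hG.differentiableAt, hG.deriv, pesinMultiplier, ghat, Psi_zero,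
    ← hx.f_apply_neg_one, hB.deriv_g (hx.deriv_ne_zero _)]
  field_simp

lemma abs_deriv_pesinRemainder_zero_le (hx : HasPesinChart F χ x) (hy : HasPesinChart F χ y)
    (hB : F.HasHolderInverseBranch (x (-1))) (hχ : 0 ≤ χ) :
    |deriv (pesinRemainder F χ x y) 0| ≤
      uPes F.f χ y * |(uPes F.f χ (fhatI (-1) x))⁻¹ - (uPes F.f χ y)⁻¹| := by
  rw [hx.deriv_pesinRemainder_zero hy hB, abs_mul, abs_mul, abs_of_pos hy.uPes_pos]
  refine mul_le_of_le_one_left (mul_nonneg uPes_nonneg (abs_nonneg _)) ?_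
  exact (abs_pesinMultiplier_lt hx.summable).le.trans (Real.exp_le_one_iff.mpr (by linarith))

lemma abs_deriv_Gmap2_sub_le (hx : HasPesinChart F χ x)
    (hB : F.HasHolderInverseBranch (x (-1))) (hε : 0 < ε) (hKε : 100 * F.K * ε ≤ 1)
    (hyx : uPes F.f χ y ≤ 2 * uPes F.f χ (fhatI (-1) x))
    (ht : t ∈ Icc (-(10 * Qeps F χ ε x)) (10 * Qeps F χ ε x))
    (hs : s ∈ Icc (-(10 * Qeps F χ ε x)) (10 * Qeps F χ ε x)) :
    |deriv (Gmap2 F χ x y) t - deriv (Gmap2 F χ x y) s| ≤ ε / 2 * |t - s| ^ (F.β / 3) := by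
  have hK := F.hK
  have hβ := F.hβ0
  have hε5 : ε ≤ 1 / 5 := by nlinarith
  have hu := hx.uPes_pos
  have hv := hx.shift.uPes_pos
  have hw : 0 ≤ uPes F.f χ y := uPes_nonneg
  have htmem := hx.Psi_mem_ball hB hε hε5 ht
  have hsmem := hx.Psi_mem_ball hB hε hε5 hs
  have hg : |deriv (ghat F x) (Psi F.f χ x t) - deriv (ghat F x) (Psi F.f χ x s)| ≤
      F.K * |Psi F.f χ x t - Psi F.f χ x s| ^ F.β := by
    rw [← hx.f_apply_neg_one] at htmem hsmem
    exact hB.abs_deriv_g_sub_le _ htmem _ hsmem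
  rw [(hasDerivAt_Gmap2 (hx.differentiableAt_ghat hB htmem)).deriv,
    (hasDerivAt_Gmap2 (hx.differentiableAt_ghat hB hsmem)).deriv, ← mul_sub, ← sub_div, abs_mul,
    abs_div, abs_of_nonneg hw, abs_of_pos hu]
  set v := uPes F.f χ (fhatI (-1) x)
  calc _ ≤ uPes F.f χ y * (F.K * |Psi F.f χ x t - Psi F.f χ x s| ^ F.β) := by
        gcongr
        exact (div_le_self (abs_nonneg _) hx.one_le_uPes).trans hg
    _ ≤ 2 * v * (F.K * |t - s| ^ F.β) := by
        gcongr ?_ * (F.K * ?_ ^ F.β)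
        exact hx.abs_Psi_sub_Psi_le t s
    _ ≤ 2 * v * (F.K * (20 * (ε ^ 2 / v) * |t - s| ^ (F.β / 3))) := by
        gcongr
        exact abs_sub_rpow_le hε hx ht hs
    _ = 40 * F.K * ε * ε * |t - s| ^ (F.β / 3) := by field_simp; ring
    _ ≤ 1 / 2 * ε * |t - s| ^ (F.β / 3) := by
        gcongr
        linarith
    _ = ε / 2 * |t - s| ^ (F.β / 3) := by ring

lemma holConst_deriv_pesinRemainder_lt (hx : HasPesinChart F χ x)
    (hB : F.HasHolderInverseBranch (x (-1))) (hε : 0 < ε) (hKε : 100 * F.K * ε ≤ 1)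
    (hyx : uPes F.f χ y ≤ 2 * uPes F.f χ (fhatI (-1) x)) :
    holConst (F.β / 3) (deriv (pesinRemainder F χ x y))
      (Icc (-(10 * Qeps F χ ε x)) (10 * Qeps F χ ε x)) < ε := by
  have hε5 : ε ≤ 1 / 5 := by nlinarith [F.hK]
  refine (holConst_le (half_pos hε).le fun t ht s hs => ?_).trans_lt (half_lt_self hε)
  rw [deriv_pesinRemainder (hx.differentiableAt_Gmap2 hB hε hε5 ht),
    deriv_pesinRemainder (hx.differentiableAt_Gmap2 hB hε hε5 hs), sub_sub_sub_cancel_right]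
  exact hx.abs_deriv_Gmap2_sub_le hB hε hKε hyx ht hs

lemma abs_Gmap2_sub_le (hx : HasPesinChart F χ x)
    (hB : F.HasHolderInverseBranch (x (-1))) (hε : 0 < ε) (hKε : 100 * F.K * ε ≤ 1)
    (hyx : uPes F.f χ y ≤ 2 * uPes F.f χ (fhatI (-1) x))
    (hderiv : |deriv (pesinRemainder F χ x y) 0| ≤ ε)
    (ht : t ∈ Icc (-(10 * Qeps F χ ε x)) (10 * Qeps F χ ε x))
    (hs : s ∈ Icc (-(10 * Qeps F χ ε x)) (10 * Qeps F χ ε x)) :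
    |Gmap2 F χ x y t - Gmap2 F χ x y s| ≤ (Real.exp (-χ) + 2 * ε) * |t - s| := by
  have hε100 : ε ≤ 1 / 100 := by nlinarith [F.hK]
  have hQ : 10 * Qeps F χ ε x ≤ 1 := by linarith [Qeps_le_eps hε (by linarith) hx]
  have h0 : (0 : ℝ) ∈ Icc (-(10 * Qeps F χ ε x)) (10 * Qeps F χ ε x) := by
    have : 0 ≤ Qeps F χ ε x := Qeps_nonneg
    constructor <;> linarith
  have hdiff : ∀ z ∈ Icc (-(10 * Qeps F χ ε x)) (10 * Qeps F χ ε x),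
      DifferentiableAt ℝ (Gmap2 F χ x y) z := fun _ hz =>
    hx.differentiableAt_Gmap2 hB hε (by linarith) hz
  have hG0 : |deriv (Gmap2 F χ x y) 0| ≤ Real.exp (-χ) + ε := by
    rw [← sub_add_cancel (deriv (Gmap2 F χ x y) 0) (pesinMultiplier F.f χ x),
      ← deriv_pesinRemainder (hdiff 0 h0)]
    refine (abs_add_le _ _).trans ?_
    linarith [abs_pesinMultiplier_lt hx.summable]
  refine (abs_sub_le_of_deriv_holder_at_zero (γ := F.β / 3) hQ (by linarith [F.hβ0])
    (half_pos hε).le hdiff (fun z hz => ?_) ht hs).trans ?_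
  · simpa only [sub_zero] using hx.abs_deriv_Gmap2_sub_le hB hε hKε hyx hz h0
  · exact mul_le_mul_of_nonneg_right (by linarith) (abs_nonneg _)

end HasPesinChart

end TwoCharts

theorem nonlinear_pesin_two_charts_general (F : GoodMap)
    (hF : ∀ z ∈ Mset, z ∉ F.S → F.f z ∉ F.S → F.HasHolderInverseBranch z) (χ : ℝ) (hχ : 0 < χ) :
    ∃ ε₀ > 0, ∀ ε : ℝ, 0 < ε → ε < ε₀ →
      ∀ x y : ℤ → ℝ, HasPesinChart F χ x → HasPesinChart F χ y → ∀ p q : ℝ,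
        0 < p → p ≤ Qeps F χ ε (fhatI (-1) x) → 0 < q → q ≤ Qeps F χ ε y →
        |x (-1) - y 0| + |(uPes F.f χ (fhatI (-1) x))⁻¹ - (uPes F.f χ y)⁻¹| < (p * q) ^ 4 →
        (∀ t ∈ Set.Icc (-(10 * Qeps F χ ε x)) (10 * Qeps F χ ε x),
          Psi F.f χ x t ∈ Metric.ball (x 0) (2 * F.r (x (-1)))) ∧
        (∃ A : ℝ, ∃ h : ℝ → ℝ,
          (∀ t ∈ Set.Icc (-(10 * Qeps F χ ε x)) (10 * Qeps F χ ε x),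
            Gmap2 F χ x y t = A * t + h t) ∧
          |A| < Real.exp (-χ) ∧
          |h 0| < ε * (p * q) ^ 3 ∧ |deriv h 0| < ε * (p * q) ^ 3 ∧
          holConst (F.β / 3) (deriv h)
            (Set.Icc (-(10 * Qeps F χ ε x)) (10 * Qeps F χ ε x)) < ε) ∧
        (∀ t ∈ Set.Icc (-(10 * Qeps F χ ε x)) (10 * Qeps F χ ε x),
          ∀ s ∈ Set.Icc (-(10 * Qeps F χ ε x)) (10 * Qeps F χ ε x),
            |Gmap2 F χ x y t - Gmap2 F χ x y s| ≤ Real.exp (-χ / 2) * |t - s|) := by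
  have hK := F.hK
  have hgap : Real.exp (-χ) < Real.exp (-χ / 2) := Real.exp_lt_exp.mpr (by linarith)
  refine ⟨min (1 / (100 * F.K)) ((Real.exp (-χ / 2) - Real.exp (-χ)) / 2),
    lt_min (by positivity) (by linarith), ?_⟩
  intro ε hε hε₀ x y hx hy p q hp hpQ hq hqQ hov
  obtain ⟨hKε, hχε⟩ := lt_min_iff.mp hε₀
  replace hKε : 100 * F.K * ε ≤ 1 := ((lt_div_iff₀' (by positivity)).mp hKε).le
  have hε100 : ε ≤ 1 / 100 := by nlinarith
  have hB : F.HasHolderInverseBranch (x (-1)) :=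
    hF _ (hx.mem_Mhat.1 _) (hx.notMem_S _) (hx.f_apply_neg_one ▸ hx.notMem_S 0)
  have hw := hy.uPes_pos
  have hp1 : p ≤ 1 := by linarith [Qeps_le_eps hε (by linarith) hx.shift]
  have hq1 : q ≤ 1 := by linarith [Qeps_le_eps hε (by linarith) hy]
  have hpq : ε * (p * q) ^ 3 ≤ ε :=
    mul_le_of_le_one_right hε.le (pow_le_one₀ (by positivity) (mul_le_one₀ hp1 hq.le hq1))
  have hwpq : uPes F.f χ y * (p * q) ≤ ε := uPes_mul_mul_le hy hε (by linarith) hp1 hq.le hqQ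
  have hzero := mul_lt_mul_pow_three hw (by positivity) hwpq
    ((le_add_of_nonneg_right (abs_nonneg _)).trans_lt hov)
  have hinv := mul_lt_mul_pow_three hw (by positivity) hwpq
    ((le_add_of_nonneg_left (abs_nonneg _)).trans_lt hov)
  have hyx := le_two_mul_of_mul_abs_inv_sub_inv_le_one hx.shift.uPes_pos hw (by linarith)
  have hderiv := (hx.abs_deriv_pesinRemainder_zero_le hy hB hχ.le).trans_lt hinv
  refine ⟨fun t ht => hx.Psi_mem_ball hB hε (by linarith) ht,
    ⟨pesinMultiplier F.f χ x, pesinRemainder F χ x y, fun t _ => by rw [pesinRemainder]; ring,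
      abs_pesinMultiplier_lt hx.summable, ?_, hderiv,
      hx.holConst_deriv_pesinRemainder_lt hB hε hKε hyx⟩, fun t ht s hs => ?_⟩
  · rwa [hx.pesinRemainder_zero hB, abs_mul, abs_of_pos hw]
  · refine (hx.abs_Gmap2_sub_le hB hε hKε hyx (hderiv.le.trans hpq) ht hs).trans ?_
    gcongr
    linarith

/-- nonlinear Pesin reduction for `G_{x̂,ŷ}` (Theorem 2.6). -/
theorem nonlinear_pesin_two_charts (F : GoodMap) (hA : F.SatA) (χ : ℝ) (hχ : 0 < χ) :
    ∃ ε₀ > 0, ∀ ε : ℝ, 0 < ε → ε < ε₀ →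
      ∀ x y : ℤ → ℝ, x ∈ NUE F χ → y ∈ NUE F χ → ∀ p q : ℝ,
        IsChart F χ ε ⟨fhatI (-1) x, p⟩ → IsChart F χ ε ⟨y, q⟩ →
        Overlap F χ ε ⟨fhatI (-1) x, p⟩ ⟨y, q⟩ →
        -- well-definedness: `Ψ_{x̂}(R[10Q]) ⊆ E_{x₋₁}`, the domain of `g_{x̂}`
        (∀ t ∈ Set.Icc (-(10 * Qeps F χ ε x)) (10 * Qeps F χ ε x),
          Psi F.f χ x t ∈ Metric.ball (x 0) (2 * F.r (x (-1)))) ∧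
        (∃ A : ℝ, ∃ h : ℝ → ℝ,
          (∀ t ∈ Set.Icc (-(10 * Qeps F χ ε x)) (10 * Qeps F χ ε x),
            Gmap2 F χ x y t = A * t + h t) ∧
          |A| < Real.exp (-χ) ∧
          |h 0| < ε * (p * q) ^ 3 ∧ |deriv h 0| < ε * (p * q) ^ 3 ∧
          holConst (F.β / 3) (deriv h)
            (Set.Icc (-(10 * Qeps F χ ε x)) (10 * Qeps F χ ε x)) < ε) ∧
        (∀ t ∈ Set.Icc (-(10 * Qeps F χ ε x)) (10 * Qeps F χ ε x),
          ∀ s ∈ Set.Icc (-(10 * Qeps F χ ε x)) (10 * Qeps F χ ε x),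
            |Gmap2 F χ x y t - Gmap2 F χ x y s| ≤ Real.exp (-χ / 2) * |t - s|) := by
  obtain ⟨ε₀, hε₀, h⟩ :=
    nonlinear_pesin_two_charts_general F (fun _ => hA.hasHolderInverseBranch) χ hχ
  exact ⟨ε₀, hε₀, fun ε hε hlt x y hx hy p q hp hq hov =>
    h ε hε hlt x y (hasPesinChart_of_mem_NUE hx) (hasPesinChart_of_mem_NUE hy) p q
      hp.2.1 hp.2.2 hq.2.1 hq.2.2 hov.2.2⟩

end OneDim
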